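/- For every dimension d ≥ 1 there is a constant c(d) > 0 such that for all integers k ≥ 1: if P is a convex lattice polytope in R^d (the convex hull of a finite subset of Z^d) that contains no lattice segment of length k, then P has at most c(d) · k^{d-1} vertices. -/

import Mathlib

/-- The set of lattice points of `ℝ^d`: points all of whose coordinates are integers. -/
def latticePoints (d : ℕ) : Set (Fin d → ℝ) := {x | ∀ i, ∃ n : ℤ, x i = n}

/-- A set `C ⊆ ℝ^d` contains a lattice segment of length `k` if it contains a set of the form
`{x, x + y, x + 2y, …, x + ky}` with `x, y ∈ ℤ^d` and `y ≠ 0`. -/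
def ContainsLatticeSegment (d k : ℕ) (C : Set (Fin d → ℝ)) : Prop :=
  ∃ x y : Fin d → ℤ, y ≠ 0 ∧
    ∀ i : ℕ, i ≤ k → ((fun j => (x j : ℝ)) + (i : ℝ) • (fun j => (y j : ℝ))) ∈ C

/-!
Keep the convex set `P` fixed and induct on the rank `e` of the lattice whose points among the
extreme points of `P` are counted. Split these points into classes modulo `e + 1`. Fix `s₀` in a
class and choose `s₁, …, s_e` in it so that the simplex they span with `s₀` has maximal volume;
the barycentre of this simplex is a lattice point. If the index of the sublattice spanned by the
`s_i - s₀` is larger than `q ^ e`, with `q` a suitable multiple of `k`, then the pigeonhole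
principle in the quotient gives a nonzero lattice vector so short relative to the simplex that
`k` steps along it from the barycentre stay in `P`. Otherwise the dual pigeonhole gives a nonzero
integral functional bounded by `q` on the `s_i - s₀`, hence, by Cramer's rule and maximality, by
`e * q` on all differences `s - s₀`. So the class lies in `O(k)` parallel slices of smaller rank,
and a line carries at most two extreme points.
-/

section BasisDet

variable {ι R M : Type*} [Fintype ι] [DecidableEq ι] [CommRing R] [AddCommGroup M] [Module R M]

theorem basis_det_smul_eq_sum (b : Module.Basis ι R M) (v : ι → M) (x : M) :
    b.det v • x = ∑ i, b.det (Function.update v i x) • v i := by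
  refine b.ext_elem fun j => ?_
  have cramer := congr_fun ((b.toMatrix v).mulVec_cramer (b.repr x)) j
  simp only [Matrix.mulVec, dotProduct, Matrix.cramer_apply, Pi.smul_apply] at cramer
  simp only [map_smul, map_sum, Finsupp.smul_apply, Finsupp.finsetSum_apply,
    Module.Basis.det_apply, Module.Basis.toMatrix_update, ← cramer, smul_eq_mul,
    Module.Basis.toMatrix_apply, mul_comm]

theorem linearIndependent_iff_basis_det_ne_zero [IsDomain R] (b : Module.Basis ι R M)
    {v : ι → M} : LinearIndependent R v ↔ b.det v ≠ 0 := by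
  rw [b.det_apply, ← Matrix.nonsingular_iff_det_ne_zero, ← Matrix.linearIndependent_col_iff]
  exact (b.equivFun.toLinearMap.linearIndependent_iff b.equivFun.ker).symm

theorem abs_dual_apply_le_of_basis_det_update_le [LinearOrder R] [IsStrictOrderedRing R]
    (b : Module.Basis ι R M) {v : ι → M} {x : M} {q : R} {g : Module.Dual R M}
    (hv : b.det v ≠ 0) (hx : ∀ i, |b.det (Function.update v i x)| ≤ |b.det v|)
    (hg : ∀ i, |g (v i)| ≤ q) : |g x| ≤ Fintype.card ι * q := by
  refine le_of_mul_le_mul_left ?_ (abs_pos.2 hv)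
  calc |b.det v| * |g x| = |∑ i, b.det (Function.update v i x) * g (v i)| := by
        rw [← abs_mul, ← smul_eq_mul, ← map_smul, basis_det_smul_eq_sum, map_sum]
        simp only [map_smul, smul_eq_mul]
    _ ≤ ∑ i, |b.det (Function.update v i x)| * |g (v i)| := by
        simpa only [abs_mul] using
          Finset.abs_sum_le_sum_abs (fun i => b.det (Function.update v i x) * g (v i)) _
    _ ≤ ∑ _i : ι, |b.det v| * q :=
        Finset.sum_le_sum fun i _ => mul_le_mul (hx i) (hg i) (abs_nonneg _) (abs_nonneg _)
    _ = |b.det v| * (Fintype.card ι * q) := by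
        rw [Finset.sum_const, Finset.card_univ, nsmul_eq_mul, mul_left_comm]

end BasisDet

theorem natAbs_basis_det_eq_card_quotient_span {ι L : Type*} [Fintype ι] [DecidableEq ι]
    [AddCommGroup L] (b : Module.Basis ι ℤ L) {v : ι → L} (hv : LinearIndependent ℤ v) :
    (b.det v).natAbs = Nat.card (L ⧸ Submodule.span ℤ (Set.range v)) := by
  have := Module.Free.of_basis b
  have := Module.Finite.of_basis b
  have h := Submodule.natAbs_det_basis_change b _ (Module.Basis.span hv)
  rwa [show Subtype.val ∘ Module.Basis.span hv = v from
    funext fun i => congrArg Subtype.val (Module.Basis.span_apply hv i)] at h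

theorem exists_linearIndependent_or_exists_dual_eq_zero {ι R M : Type*} [Finite ι] [CommRing R]
    [IsDomain R] [AddCommGroup M] [Module R M] (b : Module.Basis ι R M) (C : Set M) :
    (∃ v : ι → M, (∀ i, v i ∈ C) ∧ LinearIndependent R v) ∨
      ∃ g : Module.Dual R M, g ≠ 0 ∧ ∀ c ∈ C, g c = 0 := by
  classical
  have := Fintype.ofFinite ι
  have := Module.Finite.of_basis b
  obtain ⟨s, hs, maximal⟩ := exists_maximal_linearIndepOn R ((↑) : C → M)
  have := hs.finite
  have := Fintype.ofFinite s
  rcases le_or_gt (Fintype.card ι) (Fintype.card s) with hcard | hcard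
  · obtain ⟨f⟩ := Function.Embedding.nonempty_of_card_le hcard
    exact .inl ⟨fun i => f i, fun i => (f i).1.2, hs.comp f f.injective⟩
  · obtain ⟨g, hg, g_ne⟩ : ∃ g ∈ (LinearMap.pi fun i : s =>
        Module.Dual.eval R M i.1).ker, g ≠ 0 := by
      refine Submodule.exists_mem_ne_zero_of_ne_bot fun h => hcard.not_ge ?_
      simpa [Module.finrank_eq_card_basis b.dualBasis] using
        LinearMap.finrank_le_finrank_of_injective (LinearMap.ker_eq_bot.1 h)
    have g_eq_zero (c : C) (hc : c ∈ s) : g c = 0 := congrFun (LinearMap.mem_ker.1 hg) ⟨c, hc⟩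
    refine .inr ⟨g, g_ne, fun c hc => ?_⟩
    by_cases hcs : ⟨c, hc⟩ ∈ s
    · exact g_eq_zero _ hcs
    · obtain ⟨a, ha, h_span⟩ := maximal _ hcs
      have span_le_ker : Submodule.span R ((↑) '' s) ≤ g.ker :=
        Submodule.span_le.2 (Set.image_subset_iff.2 fun c hc => g_eq_zero c hc)
      have := LinearMap.mem_ker.1 (span_le_ker h_span)
      simpa [ha] using this

section ShortCombination

variable {ι L : Type*} [Fintype ι] [AddCommGroup L] {v : ι → L}

theorem exists_sub_mem_span_smul_eq_sum {D : ℤ} (hD : 0 < D) {x : L}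
    (hx : D • x ∈ Submodule.span ℤ (Set.range v)) :
    ∃ y, x - y ∈ Submodule.span ℤ (Set.range v) ∧
      ∃ r : ι → ℤ, D • y = ∑ i, r i • v i ∧ ∀ i, 0 ≤ r i ∧ r i < D := by
  obtain ⟨t, ht⟩ := (Submodule.mem_span_range_iff_exists_fun ℤ).1 hx
  refine ⟨x - ∑ i, (t i / D) • v i, ?_, fun i => t i % D, ?_, fun i =>
    ⟨Int.emod_nonneg _ hD.ne', Int.emod_lt_of_pos _ hD⟩⟩
  · rw [sub_sub_cancel]
    exact sum_mem fun i _ => Submodule.smul_mem _ _ (Submodule.subset_span ⟨i, rfl⟩)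
  · simp only [smul_sub, ← ht, Finset.smul_sum, smul_smul, ← Finset.sum_sub_distrib, ← sub_smul,
      Int.emod_def]

theorem abs_sub_lt_of_ediv_eq {a b D : ℤ} (hD : 0 < D) (h : a / D = b / D) : |a - b| < D := by
  have ha := Int.mul_ediv_add_emod a D
  have hb := Int.mul_ediv_add_emod b D
  have := Int.emod_nonneg a hD.ne'
  have := Int.emod_nonneg b hD.ne'
  have := Int.emod_lt_of_pos a hD
  have := Int.emod_lt_of_pos b hD
  rw [h] at ha
  exact abs_sub_lt_iff.2 ⟨by linarith, by linarith⟩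

theorem exists_ne_zero_smul_eq_sum_of_pow_lt_card_quotient {q : ℕ} (hq : 0 < q)
    (hcard : q ^ Fintype.card ι < Nat.card (L ⧸ Submodule.span ℤ (Set.range v))) :
    ∃ D : ℤ, 0 < D ∧ ∃ y : L, y ≠ 0 ∧ ∃ m : ι → ℤ,
      D • y = ∑ i, m i • v i ∧ ∀ i, q * |m i| ≤ D := by
  classical
  have card_pos := Nat.zero_lt_of_lt hcard
  have := Nat.finite_of_card_ne_zero card_pos.ne'
  have := Fintype.ofFinite (L ⧸ Submodule.span ℤ (Set.range v))
  obtain ⟨D, hD⟩ : ∃ D : ℤ, Nat.card (L ⧸ Submodule.span ℤ (Set.range v)) = D := ⟨_, rfl⟩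
  have D_pos : 0 < D := hD ▸ Nat.cast_pos.2 card_pos
  have smul_mem (x : L) : D • x ∈ Submodule.span ℤ (Set.range v) := by
    rw [← Submodule.Quotient.mk_eq_zero, Submodule.Quotient.mk_smul, ← hD, natCast_zsmul]
    exact card_nsmul_eq_zero'
  choose rep sub_rep_mem r rep_eq r_bounds using fun c : L ⧸ Submodule.span ℤ (Set.range v) =>
    exists_sub_mem_span_smul_eq_sum D_pos (smul_mem c.out)
  have rep_injective : Function.Injective rep := fun c c' h => by
    rw [← Submodule.Quotient.mk_out c, (Submodule.Quotient.eq _).2 (sub_rep_mem c), h,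
      ← (Submodule.Quotient.eq _).2 (sub_rep_mem c'), Submodule.Quotient.mk_out]
  obtain ⟨c, -, c', -, c_ne, heq⟩ := Finset.exists_ne_map_eq_of_card_lt_of_maps_to
    (s := Finset.univ) (t := Fintype.piFinset fun _ : ι => Finset.Ico (0 : ℤ) q)
    (f := fun c i => q * r c i / D) (by simpa [← Nat.card_eq_fintype_card] using hcard)
    fun c _ => Fintype.mem_piFinset.2 fun i => Finset.mem_Ico.2
      ⟨Int.ediv_nonneg (mul_nonneg q.cast_nonneg (r_bounds c i).1) D_pos.le,
        Int.ediv_lt_of_lt_mul D_pos (mul_lt_mul_of_pos_left (r_bounds c i).2 (Nat.cast_pos.2 hq))⟩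
  refine ⟨D, D_pos, rep c - rep c', sub_ne_zero.2 (rep_injective.ne c_ne), r c - r c', ?_,
    fun i => ?_⟩
  · simp only [smul_sub, rep_eq, Pi.sub_apply, sub_smul, Finset.sum_sub_distrib]
  · simpa [← mul_sub, abs_mul] using (abs_sub_lt_of_ediv_eq D_pos (congrFun heq i)).le

end ShortCombination

-- The rows `w` of the matrix of `v` span a sublattice of `ι → ℤ` of index `|det v|`. Two vectors of
-- `{0, …, q}^ι` in the same class differ by a combination of rows, and its coefficients define `g`.
theorem exists_dual_abs_le_of_natAbs_basis_det_lt {ι L : Type*} [Fintype ι] [DecidableEq ι]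
    [AddCommGroup L] (b : Module.Basis ι ℤ L) {v : ι → L} (hv : LinearIndependent ℤ v) {q : ℕ}
    (hq : (b.det v).natAbs < (q + 1) ^ Fintype.card ι) :
    ∃ g : Module.Dual ℤ L, g ≠ 0 ∧ ∀ i, |g (v i)| ≤ q := by
  let w : ι → ι → ℤ := fun j i => b.coord j (v i)
  have det_w : (Pi.basisFun ℤ ι).det w = b.det v := by
    rw [Pi.basisFun_det_apply, b.det_apply]
    rfl
  have hw : LinearIndependent ℤ w := by
    rw [linearIndependent_iff_basis_det_ne_zero (Pi.basisFun ℤ ι), det_w,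
      ← linearIndependent_iff_basis_det_ne_zero]
    exact hv
  rw [← det_w, natAbs_basis_det_eq_card_quotient_span _ hw] at hq
  have : Finite ((ι → ℤ) ⧸ Submodule.span ℤ (Set.range w)) :=
    Nat.finite_of_card_ne_zero <| by
      rw [← natAbs_basis_det_eq_card_quotient_span (Pi.basisFun ℤ ι) hw, Int.natAbs_ne_zero]
      exact (linearIndependent_iff_basis_det_ne_zero _).1 hw
  have := Fintype.ofFinite ((ι → ℤ) ⧸ Submodule.span ℤ (Set.range w))
  obtain ⟨f, f', f_ne, heq⟩ := Fintype.exists_ne_map_eq_of_card_lt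
    (fun f : ι → Fin (q + 1) => (Submodule.Quotient.mk fun i => ((f i : ℕ) : ℤ) :
      (ι → ℤ) ⧸ Submodule.span ℤ (Set.range w)))
    (by simpa only [Nat.card_eq_fintype_card, Fintype.card_fun, Fintype.card_fin] using hq)
  obtain ⟨t, ht⟩ := (Submodule.mem_span_range_iff_exists_fun ℤ).1
    ((Submodule.Quotient.eq _).1 heq)
  have g_apply (i : ι) : (∑ j, t j • b.coord j) (v i) = (f i : ℤ) - f' i := by
    simpa [w] using congrFun ht i
  refine ⟨∑ j, t j • b.coord j, fun hg => f_ne (funext fun i => Fin.ext ?_), fun i => ?_⟩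
  · have := g_apply i
    rw [hg, LinearMap.zero_apply] at this
    omega
  · rw [g_apply, abs_le]
    omega

theorem exists_dual_abs_le_or_exists_smul_eq_sum {ι L : Type*} [Fintype ι] [Nonempty ι]
    [AddCommGroup L] (b : Module.Basis ι ℤ L) {C : Set L} (hC : C.Finite) {q : ℕ} (hq : 0 < q) :
    (∃ g : Module.Dual ℤ L, g ≠ 0 ∧ ∀ c ∈ C, |g c| ≤ Fintype.card ι * q) ∨
      ∃ v : ι → L, (∀ i, v i ∈ C) ∧ ∃ D : ℤ, 0 < D ∧ ∃ y : L, y ≠ 0 ∧ ∃ m : ι → ℤ,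
        D • y = ∑ i, m i • v i ∧ ∀ i, q * |m i| ≤ D := by
  classical
  obtain ⟨v₀, hv₀, v₀_indep⟩ | ⟨g, g_ne, hg⟩ := exists_linearIndependent_or_exists_dual_eq_zero b C
  swap
  · exact .inl ⟨g, g_ne, fun c hc => by rw [hg c hc, abs_zero]; positivity⟩
  obtain ⟨v, hv, maximal⟩ := Set.exists_max_image _ (fun v => |b.det v|)
    (Set.Finite.pi' fun _ : ι => hC) ⟨v₀, hv₀⟩
  have det_ne : b.det v ≠ 0 := abs_pos.1 <| (maximal v₀ hv₀).trans_lt' <|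
    abs_pos.2 <| (linearIndependent_iff_basis_det_ne_zero b).1 v₀_indep
  have v_indep := (linearIndependent_iff_basis_det_ne_zero b).2 det_ne
  rcases lt_or_ge (q ^ Fintype.card ι) (b.det v).natAbs with hdet | hdet
  · rw [natAbs_basis_det_eq_card_quotient_span b v_indep] at hdet
    exact .inr ⟨v, hv, exists_ne_zero_smul_eq_sum_of_pow_lt_card_quotient hq hdet⟩
  · obtain ⟨g, g_ne, hg⟩ := exists_dual_abs_le_of_natAbs_basis_det_lt b v_indep
      (hdet.trans_lt (Nat.pow_lt_pow_left q.lt_succ_self Fintype.card_ne_zero))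
    exact .inl ⟨g, g_ne, fun c hc => abs_dual_apply_le_of_basis_det_update_le b det_ne
      (fun i => maximal _ (Function.forall_update_iff v (fun _ x => x ∈ C) |>.2
        ⟨hc, fun j _ => hv j⟩)) hg⟩

section LatticeSegments

variable {𝕜 E L : Type*} [Field 𝕜] [LinearOrder 𝕜] [IsStrictOrderedRing 𝕜] [AddCommGroup E]
  [Module 𝕜 E] [AddCommGroup L] {φ : L →ᵃ[ℤ] E} {P : Set E} {k : ℕ}

theorem affineMap_apply_mem_of_sum_smul_eq {κ : Type*} (hP : Convex 𝕜 P) {t : Finset κ}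
    {w : κ → ℤ} {p : κ → L} {x : L} (hw : ∀ j ∈ t, 0 ≤ w j) (hw_sum : 0 < ∑ j ∈ t, w j)
    (hp : ∀ j ∈ t, φ (p j) ∈ P) (hx : (∑ j ∈ t, w j) • x = ∑ j ∈ t, w j • p j) : φ x ∈ P := by
  have weight_sum_pos : 0 < ∑ j ∈ t, (w j : 𝕜) := by exact_mod_cast hw_sum
  have φ_eq (z : L) : φ z = φ.linear z + φ 0 := congrFun φ.decomp z
  have smul_φ : (∑ j ∈ t, (w j : 𝕜)) • φ x = ∑ j ∈ t, (w j : 𝕜) • φ (p j) := by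
    simp only [← Int.cast_sum, Int.cast_smul_eq_zsmul, φ_eq x, φ_eq (p _), smul_add,
      Finset.sum_add_distrib, ← map_zsmul, ← map_sum, ← Finset.sum_smul, hx]
  have := hP.centerMass_mem (fun j hj => Int.cast_nonneg (R := 𝕜) (hw j hj)) weight_sum_pos hp
  rwa [Finset.centerMass, ← smul_φ, inv_smul_smul₀ weight_sum_pos.ne'] at this

theorem affineMap_apply_add_mem_of_smul_eq_sum {ι : Type*} [Fintype ι] (hP : Convex 𝕜 P)
    {x z : L} {v : ι → L} {c : ι → ℤ} {N : ℤ} (hN : 0 < N) (hc : ∀ i, 0 ≤ c i)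
    (hc_sum : ∑ i, c i ≤ N) (hx : φ x ∈ P) (hv : ∀ i, φ (x + v i) ∈ P)
    (hz : N • z = ∑ i, c i • v i) : φ (x + z) ∈ P := by
  refine affineMap_apply_mem_of_sum_smul_eq hP (t := Finset.univ)
    (w := fun j : Option ι => j.elim (N - ∑ i, c i) c)
    (p := fun j => j.elim x fun i => x + v i) ?_ ?_ ?_ ?_
  · simpa [Option.forall] using ⟨hc_sum, hc⟩
  · simpa using hN
  · simpa [Option.forall] using ⟨hx, hv⟩
  · simp only [Fintype.sum_option, Option.elim_none, Option.elim_some, sub_add_cancel, smul_add,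
      Finset.sum_add_distrib, hz, ← Finset.sum_smul, ← add_assoc, ← add_smul]

/-- The points `x, x + y, …, x + k • y` of the lattice `L`, with `y ≠ 0`, are mapped into `P` by
`φ`. Here `φ` need not be injective, and for `φ` the inclusion of `ℤ^d` in `ℝ^d` this says that `P`
contains a lattice segment of length `k`. -/
def ContainsSegmentOf (φ : L →ᵃ[ℤ] E) (k : ℕ) (P : Set E) : Prop :=
  ∃ x y : L, y ≠ 0 ∧ ∀ i ≤ k, φ (x + i • y) ∈ P

theorem injOn_preimage_of_not_containsSegmentOf (h : ¬ContainsSegmentOf φ k P) :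
    Set.InjOn φ (φ ⁻¹' P) := by
  intro x _ y hy hxy
  by_contra hne
  refine h ⟨x, x - y, sub_ne_zero.2 hne, fun i _ => ?_⟩
  rw [add_comm, ← vadd_eq_add, AffineMap.map_vadd, map_nsmul, ← vsub_eq_sub,
    AffineMap.linearMap_vsub, hxy, vsub_self, smul_zero, zero_vadd]
  exact hy

theorem ContainsSegmentOf.of_smul_eq_sum {ι : Type*} [Fintype ι] [Nonempty ι] (hP : Convex 𝕜 P)
    {s₀ y : L} {w : ι → L} {m : ι → ℤ} {D : ℤ} (hs₀ : φ s₀ ∈ P)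
    (hw : ∀ i, φ (s₀ + (Fintype.card ι + 1) • w i) ∈ P) (hD : 0 < D) (hy : y ≠ 0)
    (hDy : D • y = ∑ i, m i • (Fintype.card ι + 1) • w i)
    (hm : ∀ i, k * (Fintype.card ι * (Fintype.card ι + 1)) * |m i| ≤ D) :
    ContainsSegmentOf φ k P := by
  -- `s₀ + ∑ i, w i` is the barycentre of the simplex
  refine ⟨s₀ + ∑ i, w i, y, hy, fun n hn => ?_⟩
  set e := Fintype.card ι with he
  have one_le_e : (1 : ℤ) ≤ e := by exact_mod_cast Fintype.card_pos (α := ι)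
  have hnm (i : ι) : e * |n * (e + 1) * m i| ≤ D := by
    refine (hm i).trans' ?_
    rw [abs_mul, abs_of_nonneg (by positivity : (0 : ℤ) ≤ n * (e + 1)), ← mul_assoc,
      mul_left_comm]
    gcongr
  rw [add_assoc]
  refine affineMap_apply_add_mem_of_smul_eq_sum hP (N := (e + 1) * D)
    (c := fun i => D + n * (e + 1) * m i) (by positivity) (fun i => ?_) ?_ hs₀ hw ?_
  · linarith [neg_abs_le (n * (e + 1) * m i), hnm i,
      le_mul_of_one_le_left (abs_nonneg (n * (e + 1) * m i)) one_le_e]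
  · have : e * ∑ i, n * (e + 1) * m i ≤ e * D := by
      rw [Finset.mul_sum, he, ← nsmul_eq_mul (Fintype.card ι), ← Finset.card_univ]
      refine Finset.sum_le_card_nsmul _ _ _ fun i _ => (hnm i).trans' ?_
      exact mul_le_mul_of_nonneg_left (le_abs_self _) (by positivity)
    rw [Finset.sum_add_distrib, Finset.sum_const, Finset.card_univ, nsmul_eq_mul]
    linarith [le_of_mul_le_mul_left this (by positivity)]
  · simp only [add_smul _ _ (_ • w _), Finset.sum_add_distrib, mul_smul _ (m _),
      ← Finset.smul_sum, ← hDy]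
    module

theorem exists_dual_abs_le_of_not_containsSegmentOf {ι : Type*} [Fintype ι] [Nonempty ι]
    (b : Module.Basis ι ℤ L) (hP : Convex 𝕜 P) (hk : 0 < k) (h : ¬ContainsSegmentOf φ k P)
    {S : Set L} (hS : S.Finite) (hSP : S ⊆ φ ⁻¹' P) {s₀ : L} (hs₀ : s₀ ∈ S)
    (hmod : ∀ s ∈ S, ∃ w, s - s₀ = (Fintype.card ι + 1) • w) :
    ∃ g : Module.Dual ℤ L, g ≠ 0 ∧ ∀ s ∈ S,
      |g s - g s₀| ≤ k * Fintype.card ι ^ 2 * (Fintype.card ι + 1) := by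
  obtain ⟨g, g_ne, hg⟩ | ⟨v, hv, D, hD, y, hy, m, hDy, hm⟩ :=
    exists_dual_abs_le_or_exists_smul_eq_sum b (hS.image (· - s₀))
      (q := k * (Fintype.card ι * (Fintype.card ι + 1))) (by positivity)
  · refine ⟨g, g_ne, fun s hs => ?_⟩
    rw [← map_sub]
    refine (hg _ (Set.mem_image_of_mem _ hs)).trans_eq ?_
    push_cast
    ring
  · choose s hs hsv using hv
    choose w hw using fun i => hmod _ (hs i)
    obtain rfl : (fun i => (Fintype.card ι + 1) • w i) = v :=
      funext fun i => (hw i).symm.trans (hsv i)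
    refine absurd (.of_smul_eq_sum hP (hSP hs₀) (fun i => ?_) hD hy hDy ?_) h
    · rw [← hw, add_sub_cancel]
      exact hSP (hs i)
    · exact_mod_cast hm

end LatticeSegments

theorem card_le_mul_of_abs_sub_le {α : Type*} {S : Finset α} {f : α → ℤ} {a : ℤ} {Q N : ℕ}
    (hf : ∀ s ∈ S, |f s - a| ≤ Q) (hN : ∀ c, (S.filter (f · = c)).card ≤ N) :
    S.card ≤ N * (2 * Q + 1) := by
  refine (Finset.card_le_mul_card_image_of_maps_to (f := f) (t := Finset.Icc (a - Q) (a + Q))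
    (fun s hs => ?_) N fun c _ => hN c).trans_eq ?_
  · obtain ⟨h₁, h₂⟩ := abs_le.1 (hf s hs)
    exact Finset.mem_Icc.2 ⟨by linarith, by linarith⟩
  · rw [Int.card_Icc]
    congr 1
    omega

theorem card_le_mul_pow_of_forall_congruent {ι L : Type*} [Fintype ι] [AddCommGroup L]
    (b : Module.Basis ι ℤ L) {n : ℕ} [NeZero n] {S : Finset L} {N : ℕ}
    (hN : ∀ T ⊆ S, (∀ s ∈ T, ∀ s' ∈ T, ∃ w, s - s' = n • w) → T.card ≤ N) :
    S.card ≤ N * n ^ Fintype.card ι := by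
  classical
  refine (Finset.card_le_mul_card_image_of_maps_to (t := Finset.univ)
    (f := fun s i => (b.repr s i : ZMod n)) (fun _ _ => Finset.mem_univ _) N fun c _ =>
      hN _ (Finset.filter_subset _ _) fun s hs s' hs' => ?_).trans_eq ?_
  · have dvd (i : ι) : (n : ℤ) ∣ b.repr (s - s') i := by
      rw [map_sub, Finsupp.sub_apply, ← ZMod.intCast_zmod_eq_zero_iff_dvd, Int.cast_sub,
        sub_eq_zero]
      exact congrFun ((Finset.mem_filter.1 hs).2.trans (Finset.mem_filter.1 hs').2.symm) i
    choose t ht using dvd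
    refine ⟨b.equivFun.symm t, b.ext_elem fun i => ?_⟩
    rw [ht, map_nsmul, Finsupp.smul_apply, ← b.equivFun_apply, LinearEquiv.apply_symm_apply,
      nsmul_eq_mul]
  · simp

theorem collinear_range_affineMap_of_finrank_eq_one (𝕜 : Type*) {E L : Type*} [Field 𝕜]
    [AddCommGroup E] [Module 𝕜 E] [AddCommGroup L] [Module.Free ℤ L]
    (hL : Module.finrank ℤ L = 1) (φ : L →ᵃ[ℤ] E) : Collinear 𝕜 (Set.range φ) := by
  have := Module.finite_of_finrank_pos (hL ▸ one_pos)
  obtain ⟨u, hu⟩ := finrank_le_one_iff.1 hL.le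
  refine (collinear_iff_of_mem (Set.mem_range_self 0)).2 ⟨φ.linear u, ?_⟩
  rintro _ ⟨x, rfl⟩
  obtain ⟨n, rfl⟩ := hu x
  refine ⟨n, ?_⟩
  rw [Int.cast_smul_eq_zsmul, ← map_smul, vadd_eq_add]
  exact congrFun φ.decomp _

theorem card_le_two_of_collinear_of_subset_extremePoints {𝕜 E : Type*} [Field 𝕜]
    [LinearOrder 𝕜] [IsStrictOrderedRing 𝕜] [AddCommGroup E] [Module 𝕜 E] {P : Set E} {A : Finset E}
    (hA : Collinear 𝕜 (A : Set E)) (hAP : (A : Set E) ⊆ P.extremePoints 𝕜) : A.card ≤ 2 := by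
  by_contra! hcard
  obtain ⟨x, hx, y, hy, z, hz, hxy, hxz, hyz⟩ := Finset.two_lt_card.1 hcard
  have not_wbtw {x y z : E} (hx : x ∈ A) (hy : y ∈ A) (hz : z ∈ A) (hxy : x ≠ y) (hyz : y ≠ z) :
      ¬Wbtw 𝕜 x y z := fun h =>
    ((mem_extremePoints_iff_forall_segment.1 (hAP hy)).2 x (hAP hx).1 z (hAP hz).1
      (mem_segment_iff_wbtw.2 h)).elim hxy hyz.symm
  have hcol : Collinear 𝕜 {x, y, z} := hA.subset <| by
    simpa [Set.insert_subset_iff] using ⟨hx, hy, hz⟩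
  rcases hcol.wbtw_or_wbtw_or_wbtw with h | h | h
  · exact not_wbtw hx hy hz hxy hyz h
  · exact not_wbtw hy hz hx hyz hxz.symm h
  · exact not_wbtw hz hx hy hxz.symm hxy h

theorem finrank_ker_dual_add_one {R M : Type*} [CommRing R] [IsDomain R] [AddCommGroup M]
    [Module R M] [Module.Finite R M] {g : Module.Dual R M} (hg : g ≠ 0) :
    Module.finrank R g.ker + 1 = Module.finrank R M := by
  have := Submodule.nontrivial_iff_ne_bot.2 (mt LinearMap.range_eq_bot.1 hg)
  have finrank_range : Module.finrank R g.range = 1 := le_antisymm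
    (g.range.finrank_le.trans_eq (Module.finrank_self R)) Module.finrank_pos
  rw [← Submodule.finrank_quotient_add_finrank g.ker, g.quotKerEquivRange.finrank_eq,
    finrank_range, add_comm]

theorem encard_le_of_forall_finset_card_le {α : Type*} {A : Set α} {N : ℕ}
    (h : ∀ S : Finset α, (S : Set α) ⊆ A → S.card ≤ N) : A.encard ≤ N := by
  by_contra! hA
  obtain ⟨t, htA, ht⟩ := Set.exists_subset_encard_eq (Order.add_one_le_of_lt hA)
  have t_fin : t.Finite := Set.finite_of_encard_eq_coe (k := N + 1) (by exact_mod_cast ht)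
  have := h t_fin.toFinset (by simpa using htA)
  rw [t_fin.encard_eq_coe_toFinset_card] at ht
  norm_cast at ht
  omega

section VertexBound

variable {𝕜 E : Type*} [Field 𝕜] [LinearOrder 𝕜] [IsStrictOrderedRing 𝕜] [AddCommGroup E]
  [Module 𝕜 E] {P : Set E} {k : ℕ}

theorem card_le_of_slice_card_le {L : Type*} [AddCommGroup L] {φ : L →ᵃ[ℤ] E} {ι : Type*}
    [Fintype ι] [Nonempty ι] (b : Module.Basis ι ℤ L) (hP : Convex 𝕜 P) (hk : 0 < k)
    (h : ¬ContainsSegmentOf φ k P) {S : Finset L} (hSP : (S : Set L) ⊆ φ ⁻¹' P) {N : ℕ}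
    (hN : ∀ g : Module.Dual ℤ L, g ≠ 0 → ∀ a, (S.filter (g · = a)).card ≤ N) :
    S.card ≤ N * (2 * (k * Fintype.card ι ^ 2 * (Fintype.card ι + 1)) + 1) *
      (Fintype.card ι + 1) ^ Fintype.card ι := by
  classical
  refine card_le_mul_pow_of_forall_congruent b fun T hTS hT => ?_
  obtain rfl | ⟨s₀, hs₀⟩ := T.eq_empty_or_nonempty
  · simp
  obtain ⟨g, g_ne, hg⟩ := exists_dual_abs_le_of_not_containsSegmentOf b hP hk h T.finite_toSet
    ((Finset.coe_subset.2 hTS).trans hSP) hs₀ fun s hs => hT s hs s₀ hs₀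
  refine card_le_mul_of_abs_sub_le (f := g) (a := g s₀) (by exact_mod_cast hg) fun a => ?_
  exact (Finset.card_le_card (Finset.filter_subset_filter _ hTS)).trans (hN g g_ne a)

theorem encard_preimage_extremePoints_le_two {L : Type*} [AddCommGroup L] [Module.Free ℤ L]
    (hL : Module.finrank ℤ L = 1) {φ : L →ᵃ[ℤ] E} (h : ¬ContainsSegmentOf φ k P) :
    (φ ⁻¹' P.extremePoints 𝕜).encard ≤ 2 := by
  classical
  have φ_injOn := (injOn_preimage_of_not_containsSegmentOf h).mono
    (Set.preimage_mono (extremePoints_subset (𝕜 := 𝕜)))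
  refine encard_le_of_forall_finset_card_le fun S hS => ?_
  rw [← Finset.card_image_of_injOn (φ_injOn.mono hS)]
  refine card_le_two_of_collinear_of_subset_extremePoints (𝕜 := 𝕜) (P := P)
    ((collinear_range_affineMap_of_finrank_eq_one 𝕜 hL φ).subset ?_) ?_
  · simp
  · simpa using hS

theorem encard_slice_le {L : Type*} [AddCommGroup L] {φ : L →ᵃ[ℤ] E} {Q : Set E}
    (h : ¬ContainsSegmentOf φ k P) {g : Module.Dual ℤ L} {N : ℕ∞}
    (hN : ∀ ψ : g.ker →ᵃ[ℤ] E, ¬ContainsSegmentOf ψ k P → (ψ ⁻¹' Q).encard ≤ N) (a : ℤ) :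
    {s ∈ φ ⁻¹' Q | g s = a}.encard ≤ N := by
  obtain hempty | ⟨s₀, -, hs₀⟩ := {s ∈ φ ⁻¹' Q | g s = a}.eq_empty_or_nonempty
  · rw [hempty, Set.encard_empty]
    exact zero_le
  let ψ : g.ker →ᵃ[ℤ] E :=
    φ.comp ((AffineEquiv.vaddConst ℤ s₀).toAffineMap.comp g.ker.subtype.toAffineMap)
  have hψ : ¬ContainsSegmentOf ψ k P := fun ⟨x, y, hy, hxy⟩ =>
    h ⟨x + s₀, y, by simpa using hy, fun i hi => by
      rw [add_right_comm]
      exact hxy i hi⟩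
  refine (Set.encard_le_encard ?_).trans <|
    (Set.encard_image_le (fun x : g.ker => (x : L) + s₀) _).trans (hN ψ hψ)
  rintro s ⟨hs, hsa⟩
  refine ⟨⟨s - s₀, ?_⟩, ?_, sub_add_cancel s s₀⟩
  · rw [LinearMap.mem_ker, map_sub, hsa, hs₀, sub_self]
  · change φ (s - s₀ + s₀) ∈ Q
    rwa [sub_add_cancel]

/-- The factor `c(r + 1)` of `k ^ r` in the bound for lattices of rank `r + 1`: a set of vertices
splits into `(r + 3) ^ (r + 2)` congruence classes modulo `r + 3`, and each of these into
`O((r + 2) ^ 2 * (r + 3) * k)` slices of rank one less. -/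
def vertexBoundConst : ℕ → ℕ
  | 0 => 2
  | r + 1 => vertexBoundConst r * (2 * ((r + 2) ^ 2 * (r + 3)) + 1) * (r + 3) ^ (r + 2)

theorem vertexBoundConst_pos (r : ℕ) : 0 < vertexBoundConst r := by
  induction r with
  | zero => exact two_pos
  | succ r ih => rw [vertexBoundConst]; positivity

theorem no_segment_polytope_vertex_bound_general {L : Type*} [AddCommGroup L] [Module.Free ℤ L]
    {r : ℕ} (hL : Module.finrank ℤ L = r + 1) {φ : L →ᵃ[ℤ] E} (hP : Convex 𝕜 P) (hk : 0 < k)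
    (h : ¬ContainsSegmentOf φ k P) :
    (φ ⁻¹' P.extremePoints 𝕜).encard ≤ (vertexBoundConst r * k ^ r : ℕ) := by
  induction r generalizing L with
  | zero => simpa [vertexBoundConst] using encard_preimage_extremePoints_le_two hL h
  | succ r ih =>
    have := Module.finite_of_finrank_pos (R := ℤ) (M := L) (by omega)
    refine encard_le_of_forall_finset_card_le fun S hS =>
      (card_le_of_slice_card_le (Module.finBasisOfFinrankEq ℤ L hL) hP hk h
        (hS.trans (Set.preimage_mono extremePoints_subset)) (N := vertexBoundConst r * k ^ r)
        fun g g_ne a => ?_).trans ?_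
    · have finrank_ker : Module.finrank ℤ g.ker = r + 1 :=
        Nat.succ_injective ((finrank_ker_dual_add_one g_ne).trans hL)
      rw [← Nat.cast_le (α := ℕ∞), ← Set.encard_coe_eq_coe_finsetCard]
      refine (Set.encard_le_encard fun s hs => ?_).trans
        (encard_slice_le h (fun ψ hψ => ih finrank_ker hψ) a)
      exact ⟨hS (Finset.mem_filter.1 hs).1, (Finset.mem_filter.1 hs).2⟩
    · calc
        _ ≤ vertexBoundConst r * k ^ r * (k * (2 * ((r + 2) ^ 2 * (r + 3)) + 1)) *
              (r + 3) ^ (r + 2) := by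
          rw [Fintype.card_fin]
          gcongr
          nlinarith
        _ = vertexBoundConst (r + 1) * k ^ (r + 1) := by
          rw [vertexBoundConst]
          ring

end VertexBound

section StandardLattice

/-- The inclusion of the standard lattice `ℤ^d` in `ℝ^d`. -/
def latticeInclusion (d : ℕ) : (Fin d → ℤ) →ₗ[ℤ] Fin d → ℝ :=
  (Algebra.linearMap ℤ ℝ).compLeft (Fin d)

theorem range_latticeInclusion (d : ℕ) : Set.range (latticeInclusion d) = latticePoints d := by
  ext x
  refine ⟨?_, fun hx => ?_⟩
  · rintro ⟨z, rfl⟩ i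
    exact ⟨z i, rfl⟩
  · choose z hz using hx
    exact ⟨z, funext fun i => (hz i).symm⟩

theorem containsSegmentOf_latticeInclusion_iff {d k : ℕ} {C : Set (Fin d → ℝ)} :
    ContainsSegmentOf (latticeInclusion d).toAffineMap k C ↔ ContainsLatticeSegment d k C := by
  refine exists₂_congr fun x y => and_congr_right fun _ => forall₂_congr fun i _ => ?_
  rw [LinearMap.coe_toAffineMap, map_add, map_nsmul, ← Nat.cast_smul_eq_nsmul ℝ]
  rfl

theorem ncard_extremePoints_le_of_not_containsLatticeSegment {r k : ℕ} (hk : 0 < k)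
    {P : Set (Fin (r + 1) → ℝ)} (hP : Convex ℝ P)
    (hext : P.extremePoints ℝ ⊆ latticePoints (r + 1)) (h : ¬ContainsLatticeSegment (r + 1) k P) :
    (P.extremePoints ℝ).ncard ≤ vertexBoundConst r * k ^ r := by
  rw [← containsSegmentOf_latticeInclusion_iff] at h
  refine ENat.toNat_le_of_le_natCast ?_
  rw [← Set.image_preimage_eq_of_subset (hext.trans_eq (range_latticeInclusion _).symm)]
  exact (Set.encard_image_le _ _).trans
    (no_segment_polytope_vertex_bound_general (Module.finrank_fin_fun ℤ) hP hk h)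

end StandardLattice

/-- For every `d ≥ 1` there is a constant `c(d) > 0` such that any convex
lattice polytope in `ℝ^d` containing no lattice segment of length `k` has at most
`c(d) · k^(d-1)` vertices. -/
theorem no_segment_polytope_vertex_bound (d : ℕ) (hd : 1 ≤ d) :
    ∃ c : ℝ, 0 < c ∧ ∀ k : ℕ, 1 ≤ k → ∀ V : Finset (Fin d → ℝ),
      (V : Set (Fin d → ℝ)) ⊆ latticePoints d →
      ¬ContainsLatticeSegment d k (convexHull ℝ (V : Set (Fin d → ℝ))) →
      ((Set.extremePoints ℝ (convexHull ℝ (V : Set (Fin d → ℝ)))).ncard : ℝ) ≤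
        c * (k : ℝ) ^ (d - 1) := by
  obtain ⟨r, rfl⟩ := Nat.exists_eq_add_of_le' hd
  refine ⟨vertexBoundConst r, Nat.cast_pos.2 (vertexBoundConst_pos r), fun k hk V hV h => ?_⟩
  exact_mod_cast ncard_extremePoints_le_of_not_containsLatticeSegment hk (convex_convexHull ℝ _)
    (extremePoints_convexHull_subset.trans hV) h
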